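/- arXiv:1505.04000 — 5 statements merged into one kernel-verified Lean document; each statement's English description precedes it below -/
import Mathlib

section
/- Let J and L be real symmetric positive definite 3×3 matrices and let k₁ > 0, k₂ > 0 be real numbers. Then the 6×6 real block matrix A = [[0, (1/2)I₃], [−k₁ J⁻¹ L, −k₂ J⁻¹ L]] is Hurwitz, i.e., every eigenvalue of A (over ℂ) has strictly negative real part. -/
open Matrix

lemma aux_quad (M : Matrix (Fin 3) (Fin 3) ℝ) (hM : M.PosDef) (x : Fin 3 → ℂ) (hx : x ≠ 0) :
    ∃ r : ℝ, 0 < r ∧ star x ⬝ᵥ ((M.map (algebraMap ℝ ℂ)) *ᵥ x) = (r : ℂ) := by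
  let a : Fin 3 → ℝ := fun i => (x i).re
  let b : Fin 3 → ℝ := fun i => (x i).im
  have hs : ∀ i j, M i j = M j i := fun i j => by
    have := hM.isHermitian.apply i j
    simpa using this.symm
  refine ⟨a ⬝ᵥ (M *ᵥ a) + b ⬝ᵥ (M *ᵥ b), ?_, ?_⟩
  · have ha : 0 ≤ a ⬝ᵥ (M *ᵥ a) := by
      simpa using hM.posSemidef.dotProduct_mulVec_nonneg a
    have hb : 0 ≤ b ⬝ᵥ (M *ᵥ b) := by
      simpa using hM.posSemidef.dotProduct_mulVec_nonneg b
    by_cases h : a = 0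
    · have hb0 : b ≠ 0 := by
        intro h'
        apply hx
        ext i
        exact Complex.ext (congrFun h i) (congrFun h' i)
      have : 0 < b ⬝ᵥ (M *ᵥ b) := by simpa using hM.dotProduct_mulVec_pos hb0
      linarith
    · have : 0 < a ⬝ᵥ (M *ᵥ a) := by simpa using hM.dotProduct_mulVec_pos h
      linarith
  · have h1 := hs 0 1
    have h2 := hs 0 2
    have h3 := hs 1 2
    apply Complex.ext
    · simp [dotProduct, mulVec, Fin.sum_univ_three, a, b, h1, h2, h3]
      ring
    · simp [dotProduct, mulVec, Fin.sum_univ_three, h1, h2, h3]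
      ring

lemma aux_root (j l k₁ k₂ : ℝ) (hj : 0 < j) (hl : 0 < l) (hk₁ : 0 < k₁) (hk₂ : 0 < k₂) (μ : ℂ)
    (h : 2 * μ ^ 2 * (j : ℂ) + 2 * k₂ * μ * l + k₁ * l = 0) : μ.re < 0 := by
  have hre := congrArg Complex.re h
  have him := congrArg Complex.im h
  simp [pow_two] at hre him
  by_contra hn
  push Not at hn
  have hkl : 0 < k₂ * l := by positivity
  have hkl1 : 0 < k₁ * l := by positivity
  have h2 : μ.im * (4 * μ.re * j + 2 * (k₂ * l)) = 0 := by linarith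
  have h3 : 0 < 4 * μ.re * j + 2 * (k₂ * l) := by positivity
  have h4 : μ.im = 0 := by
    rcases mul_eq_zero.mp h2 with h | h
    · exact h
    · linarith
  rw [h4] at hre
  have : 0 ≤ μ.re * μ.re * j := by positivity
  have : 0 ≤ μ.re * (k₂ * l) := by positivity
  nlinarith

/-- Let `J` and `L` be real symmetric positive definite 3×3 matrices and
`k₁ > 0`, `k₂ > 0`. Then the 6×6 block matrix
`A = [[0, (1/2)I₃], [−k₁ J⁻¹ L, −k₂ J⁻¹ L]]` is Hurwitz: every complex eigenvalue of `A`
has strictly negative real part. -/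
theorem limit_state_feedback_matrix_hurwitz
    (J L : Matrix (Fin 3) (Fin 3) ℝ) (hJ : J.PosDef) (hL : L.PosDef)
    (k₁ k₂ : ℝ) (hk₁ : 0 < k₁) (hk₂ : 0 < k₂) :
    ∀ μ ∈ spectrum ℂ
      ((Matrix.fromBlocks
        (0 : Matrix (Fin 3) (Fin 3) ℝ) ((1/2 : ℝ) • (1 : Matrix (Fin 3) (Fin 3) ℝ))
        (-(k₁ • (J⁻¹ * L))) (-(k₂ • (J⁻¹ * L)))).map (algebraMap ℝ ℂ)),
      μ.re < 0 := by
  intro μ hμ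
  rw [spectrum.mem_iff, Matrix.isUnit_iff_isUnit_det, isUnit_iff_ne_zero, not_not,
    ← Matrix.exists_mulVec_eq_zero_iff] at hμ
  obtain ⟨v, hv, h⟩ := hμ
  set c := algebraMap ℝ ℂ with hc
  obtain ⟨x, y, rfl⟩ : ∃ x y : Fin 3 → ℂ, v = Sum.elim x y :=
    ⟨v ∘ Sum.inl, v ∘ Sum.inr, by ext i; cases i <;> rfl⟩
  rw [Matrix.sub_mulVec, sub_eq_zero, Algebra.algebraMap_eq_smul_one, Matrix.smul_mulVec,
    Matrix.one_mulVec, Matrix.fromBlocks_map, Matrix.fromBlocks_mulVec] at h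
  have e0 : (0 : Matrix (Fin 3) (Fin 3) ℝ).map c = 0 := by ext i j; simp
  have e1 : ((1/2 : ℝ) • (1 : Matrix (Fin 3) (Fin 3) ℝ)).map c = (1/2 : ℂ) • 1 := by
    ext i j; by_cases hij : i = j <;> simp [hc, hij, Matrix.one_apply]
  have e2 : ∀ k : ℝ, (-(k • (J⁻¹ * L))).map c = -((k : ℂ) • (J⁻¹.map c * L.map c)) := by
    intro k
    rw [← Matrix.map_mul]
    ext i j; simp [hc]
  rw [e0, e1, e2, e2] at h
  have hxy : y = (2 * μ) • x := by
    ext i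
    have := congrFun h (Sum.inl i)
    simp [Matrix.smul_mulVec] at this
    simp only [Pi.smul_apply, smul_eq_mul]
    linear_combination (-2) * this
  have hx : x ≠ 0 := by
    rintro rfl
    apply hv
    rw [hxy]
    ext i; cases i <;> simp
  have hb : μ • y = -((k₁ : ℂ) • (J⁻¹.map c * L.map c)) *ᵥ x
      + -((k₂ : ℂ) • (J⁻¹.map c * L.map c)) *ᵥ y := by
    ext i
    have := congrFun h (Sum.inr i)
    simpa using this
  have hJJ : J.map c * J⁻¹.map c = 1 := by
    rw [← Matrix.map_mul, Matrix.mul_nonsing_inv _ ((Matrix.isUnit_iff_isUnit_det _).mp hJ.isUnit)]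
    ext i j; by_cases hij : i = j <;> simp [hij, Matrix.one_apply]
  have hb2 := congrArg (fun w => star x ⬝ᵥ (J.map c *ᵥ w)) hb
  rw [hxy] at hb2
  simp only [Matrix.neg_mulVec, Matrix.smul_mulVec, Matrix.mulVec_add, Matrix.mulVec_neg,
    Matrix.mulVec_smul, Matrix.mulVec_mulVec, ← Matrix.mul_assoc, hJJ, Matrix.one_mul,
    dotProduct_add, dotProduct_neg, dotProduct_smul, smul_eq_mul] at hb2
  obtain ⟨j, hj, ej⟩ := aux_quad J hJ x hx
  obtain ⟨l, hl, el⟩ := aux_quad L hL x hx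
  rw [ej, el] at hb2
  exact aux_root j l k₁ k₂ hj hl hk₁ hk₂ μ (by linear_combination hb2)
end

section
/- Let J and L be real symmetric positive definite 3×3 matrices and k₁ > 0, k₂ > 0. Let w₁, w₂ : ℝ → ℝ³ be differentiable functions satisfying w₁'(t) = (1/2) w₂(t) and J w₂'(t) = −L (k₁ w₁(t) + k₂ w₂(t)) for all t. Then the function V₁(t) = k₁ w₁(t)ᵀ L w₁(t) + (1/2) w₂(t)ᵀ J w₂(t) is differentiable with V₁'(t) = −k₂ w₂(t)ᵀ L w₂(t) for all t. -/
open Matrix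

lemma quad_symm_aux (M : Matrix (Fin 3) (Fin 3) ℝ) (hM : M.PosDef) (u v : Fin 3 → ℝ) :
    u ⬝ᵥ (M *ᵥ v) = v ⬝ᵥ (M *ᵥ u) := by
  have h : Mᵀ = M := by
    have := hM.isHermitian.eq
    rwa [conjTranspose_eq_transpose_of_trivial] at this
  rw [dotProduct_mulVec, ← mulVec_transpose, h, dotProduct_comm]

lemma quad_deriv_aux (M : Matrix (Fin 3) (Fin 3) ℝ) (hM : M.PosDef)
    (w : ℝ → (Fin 3 → ℝ)) (w' : Fin 3 → ℝ) (t : ℝ) (hw : HasDerivAt w w' t) :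
    HasDerivAt (fun t => w t ⬝ᵥ (M *ᵥ w t)) (2 * (w t ⬝ᵥ (M *ᵥ w'))) t := by
  have hc := hasDerivAt_pi.1 hw
  have h : HasDerivAt (fun t => ∑ i, w t i * ∑ j, M i j * w t j)
      (∑ i, (w' i * (∑ j, M i j * w t j) + w t i * ∑ j, M i j * w' j)) t :=
    HasDerivAt.fun_sum fun i _ => (hc i).mul
      (HasDerivAt.fun_sum fun j _ => (hc j).const_mul (M i j))
  have e : 2 * (w t ⬝ᵥ (M *ᵥ w')) = w' ⬝ᵥ (M *ᵥ w t) + w t ⬝ᵥ (M *ᵥ w') := by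
    rw [quad_symm_aux M hM w' (w t)]; ring
  rw [e]
  rw [Finset.sum_add_distrib] at h
  exact h

/-- For the linear system `ẇ₁ = (1/2)w₂`, `J ẇ₂ = −L(k₁w₁ + k₂w₂)` with
`J, L` symmetric positive definite and `k₁, k₂ > 0`, the Lyapunov function
`V₁ = k₁ w₁ᵀLw₁ + (1/2) w₂ᵀJw₂` is differentiable along solutions with derivative
`V₁' = −k₂ w₂ᵀLw₂`. -/
theorem lyapunov_derivative_state_feedback
    (J L : Matrix (Fin 3) (Fin 3) ℝ) (hJ : J.PosDef) (hL : L.PosDef)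
    (k₁ k₂ : ℝ) (hk₁ : 0 < k₁) (hk₂ : 0 < k₂)
    (w₁ w₂ w₂' : ℝ → (Fin 3 → ℝ))
    (hw₁ : ∀ t, HasDerivAt w₁ ((1/2 : ℝ) • w₂ t) t)
    (hw₂ : ∀ t, HasDerivAt w₂ (w₂' t) t)
    (hw₂' : ∀ t, J *ᵥ w₂' t = -(L *ᵥ (k₁ • w₁ t + k₂ • w₂ t))) :
    ∀ t, HasDerivAt
      (fun t => k₁ * (w₁ t ⬝ᵥ (L *ᵥ w₁ t)) + (1/2) * (w₂ t ⬝ᵥ (J *ᵥ w₂ t)))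
      (-(k₂ * (w₂ t ⬝ᵥ (L *ᵥ w₂ t)))) t := by
  intro t
  have h := ((quad_deriv_aux L hL w₁ _ t (hw₁ t)).const_mul k₁).add
    ((quad_deriv_aux J hJ w₂ _ t (hw₂ t)).const_mul (1/2))
  refine h.congr_deriv ?_
  rw [hw₂' t]
  simp only [mulVec_add, mulVec_smul, dotProduct_neg, dotProduct_add, dotProduct_smul, smul_eq_mul]
  rw [quad_symm_aux L hL (w₁ t) (w₂ t)]
  ring
end

section
/- Let J and L be real symmetric positive definite 3×3 matrices and k₁ > 0, k₂ > 0, α > 0, λ > 0. Let w₁, w₂, w₃ : ℝ → ℝ³ and w₄ : ℝ → ℝ be differentiable functions satisfying w₁' = (1/2)w₂, J w₂' = −L(k₁ w₁ + (1/2) k₂ α λ w₃), w₃' = (1/2)w₂ − α λ w₃, and w₄' = −α λ w₄. Then the function V₃(t) = k₁ w₁(t)ᵀ L w₁(t) + (1/2) w₂(t)ᵀ J w₂(t) + (1/2) k₂ α λ w₃(t)ᵀ L w₃(t) + (1/2) w₄(t)² is differentiable with V₃'(t) = −k₂ α² λ² w₃(t)ᵀ L w₃(t) − α λ w₄(t)²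 for all t. -/
open Matrix

theorem quad_symm (A : Matrix (Fin 3) (Fin 3) ℝ) (hA : A.PosDef) (u v : Fin 3 → ℝ) :
    u ⬝ᵥ (A *ᵥ v) = v ⬝ᵥ (A *ᵥ u) := by
  have h : Aᵀ = A := by
    have := hA.isHermitian.eq
    rwa [Matrix.conjTranspose_eq_transpose_of_trivial] at this
  rw [Matrix.dotProduct_mulVec, ← Matrix.mulVec_transpose, h, dotProduct_comm]

theorem quad_deriv (A : Matrix (Fin 3) (Fin 3) ℝ) (hA : A.PosDef) (w : ℝ → Fin 3 → ℝ)
    (w' : Fin 3 → ℝ) (t : ℝ) (h : HasDerivAt w w' t) :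
    HasDerivAt (fun t => w t ⬝ᵥ (A *ᵥ w t)) (2 * (w t ⬝ᵥ (A *ᵥ w'))) t := by
  have hc := hasDerivAt_pi.1 h
  have h2 : HasDerivAt (fun t => ∑ i, w t i * ∑ j, A i j * w t j)
      (∑ i, (w' i * (∑ j, A i j * w t j) + w t i * ∑ j, A i j * w' j)) t :=
    HasDerivAt.fun_sum fun i _ => (hc i).mul
      (HasDerivAt.fun_sum fun j _ => (hc j).const_mul (A i j))
  have e : 2 * (w t ⬝ᵥ (A *ᵥ w')) = w' ⬝ᵥ (A *ᵥ w t) + w t ⬝ᵥ (A *ᵥ w') := by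
    rw [quad_symm A hA w' (w t)]; ring
  rw [e]
  rw [Finset.sum_add_distrib] at h2
  exact h2

/-- For the limit linear system of the averaged output-feedback closed loop
`ẇ₁ = (1/2)w₂`, `J ẇ₂ = −L(k₁w₁ + (1/2)k₂αλw₃)`, `ẇ₃ = (1/2)w₂ − αλw₃`, `ẇ₄ = −αλw₄`,
the Lyapunov function
`V₃ = k₁ w₁ᵀLw₁ + (1/2) w₂ᵀJw₂ + (1/2)k₂αλ w₃ᵀLw₃ + (1/2) w₄²` is differentiable along
solutions with derivative `V₃' = −k₂α²λ² w₃ᵀLw₃ − αλ w₄²`. -/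
theorem lyapunov_derivative_output_feedback
    (J L : Matrix (Fin 3) (Fin 3) ℝ) (hJ : J.PosDef) (hL : L.PosDef)
    (k₁ k₂ α lam : ℝ) (hk₁ : 0 < k₁) (hk₂ : 0 < k₂) (hα : 0 < α) (hlam : 0 < lam)
    (w₁ w₂ w₂' w₃ : ℝ → (Fin 3 → ℝ)) (w₄ : ℝ → ℝ)
    (hw₁ : ∀ t, HasDerivAt w₁ ((1/2 : ℝ) • w₂ t) t)
    (hw₂ : ∀ t, HasDerivAt w₂ (w₂' t) t)
    (hw₂' : ∀ t, J *ᵥ w₂' t = -(L *ᵥ (k₁ • w₁ t + ((1/2) * k₂ * α * lam) • w₃ t)))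
    (hw₃ : ∀ t, HasDerivAt w₃ ((1/2 : ℝ) • w₂ t - (α * lam) • w₃ t) t)
    (hw₄ : ∀ t, HasDerivAt w₄ (-(α * lam) * w₄ t) t) :
    ∀ t, HasDerivAt
      (fun t => k₁ * (w₁ t ⬝ᵥ (L *ᵥ w₁ t)) + (1/2) * (w₂ t ⬝ᵥ (J *ᵥ w₂ t))
        + (1/2) * k₂ * α * lam * (w₃ t ⬝ᵥ (L *ᵥ w₃ t)) + (1/2) * (w₄ t) ^ 2)
      (-(k₂ * α ^ 2 * lam ^ 2 * (w₃ t ⬝ᵥ (L *ᵥ w₃ t))) - α * lam * (w₄ t) ^ 2) t := by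
  intro t
  have h1 := (quad_deriv L hL _ _ t (hw₁ t)).const_mul k₁
  have h2 := (quad_deriv J hJ _ _ t (hw₂ t)).const_mul (1/2)
  have h3 := (quad_deriv L hL _ _ t (hw₃ t)).const_mul ((1/2) * k₂ * α * lam)
  have h4 := ((hw₄ t).pow 2).const_mul (1/2)
  refine HasDerivAt.congr_deriv (((h1.add h2).add h3).add h4) ?_
  rw [hw₂' t]
  simp only [Matrix.mulVec_add, Matrix.mulVec_sub, Matrix.mulVec_smul, dotProduct_add,
    dotProduct_sub, dotProduct_neg, dotProduct_smul, smul_eq_mul]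
  rw [quad_symm L hL (w₁ t) (w₂ t), quad_symm L hL (w₃ t) (w₂ t)]
  push_cast
  ring
end

section
/- Let J and L be real symmetric positive definite 3×3 matrices and k₁ > 0, k₂ > 0. Then there exist constants c ≥ 1 and μ > 0 such that every solution (w₁, w₂) : [0, ∞) → ℝ³ × ℝ³ of the linear system ẇ₁ = (1/2) w₂, J ẇ₂ = −L (k₁ w₁ + k₂ w₂) satisfies ‖(w₁(t), w₂(t))‖ ≤ c e^{−μ t} ‖(w₁(0), w₂(0))‖ for all t ≥ 0. -/
open Matrix

lemma aux_coercive {E : Type*} [NormedAddCommGroup E] [InnerProductSpace ℝ E] [FiniteDimensional ℝ E]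
    (A : E →L[ℝ] E) (hA : ∀ x, x ≠ 0 → 0 < inner ℝ x (A x)) :
    ∃ m : ℝ, 0 < m ∧ ∀ x, m * ‖x‖ ^ 2 ≤ inner ℝ x (A x) := by
  by_cases hne : (Metric.sphere (0 : E) 1).Nonempty
  · have hc : IsCompact (Metric.sphere (0 : E) 1) := isCompact_sphere 0 1
    obtain ⟨x0, hx0, hmin⟩ := hc.exists_isMinOn hne
      (f := fun x => inner ℝ x (A x)) (by fun_prop)
    have h0 : x0 ≠ 0 := by
      rintro rfl
      simp at hx0
    refine ⟨inner ℝ x0 (A x0), hA x0 h0, fun x => ?_⟩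
    by_cases hx : x = 0
    · simp [hx]
    have hn : 0 < ‖x‖ := norm_pos_iff.mpr hx
    have hs : (‖x‖⁻¹ • x) ∈ Metric.sphere (0 : E) 1 := by
      simp [norm_smul, hn.ne']
    have := hmin hs
    simp only [Set.mem_setOf_eq, map_smul, inner_smul_left, inner_smul_right] at this
    simp only [conj_trivial] at this
    calc inner ℝ x0 (A x0) * ‖x‖ ^ 2 ≤ (‖x‖⁻¹ * (‖x‖⁻¹ * inner ℝ x (A x))) * ‖x‖ ^ 2 := by gcongr
      _ = inner ℝ x (A x) := by field_simp
  · refine ⟨1, one_pos, fun x => ?_⟩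
    by_cases hx : x = 0
    · simp [hx]
    exfalso
    apply hne
    have hn : 0 < ‖x‖ := norm_pos_iff.mpr hx
    exact ⟨‖x‖⁻¹ • x, by simp [norm_smul, hn.ne']⟩

lemma aux_bound {E : Type*} [NormedAddCommGroup E] [InnerProductSpace ℝ E]
    (A : E →L[ℝ] E) (B : ℝ) (hB : ‖A‖ ≤ B) (x y : E) :
    |inner ℝ x (A y)| ≤ B * (‖x‖ * ‖y‖) := by
  calc |inner ℝ x (A y)| ≤ ‖x‖ * ‖A y‖ := abs_real_inner_le_norm _ _
    _ ≤ ‖x‖ * (B * ‖y‖) := by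
      gcongr
      exact A.le_of_opNorm_le hB y
    _ = _ := by ring

lemma aux_main {E : Type*} [NormedAddCommGroup E] [InnerProductSpace ℝ E] [FiniteDimensional ℝ E]
    (J L : E →L[ℝ] E) (hJs : ∀ x y, inner ℝ x (J y) = inner ℝ y (J x))
    (hLs : ∀ x y, inner ℝ x (L y) = inner ℝ y (L x))
    (hJ : ∀ x, x ≠ 0 → 0 < inner ℝ x (J x)) (hL : ∀ x, x ≠ 0 → 0 < inner ℝ x (L x))
    (k₁ k₂ : ℝ) (hk₁ : 0 < k₁) (hk₂ : 0 < k₂) :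
    ∃ c μ : ℝ, 1 ≤ c ∧ 0 < μ ∧
      ∀ w₁ w₂ w₂' : ℝ → E,
        (∀ t ∈ Set.Ici (0 : ℝ), HasDerivWithinAt w₁ ((1/2 : ℝ) • w₂ t) (Set.Ici 0) t) →
        (∀ t ∈ Set.Ici (0 : ℝ), HasDerivWithinAt w₂ (w₂' t) (Set.Ici 0) t) →
        (∀ t ∈ Set.Ici (0 : ℝ), J (w₂' t) = -(L (k₁ • w₁ t + k₂ • w₂ t))) →
        ∀ t ∈ Set.Ici (0 : ℝ),
          Real.sqrt (‖w₁ t‖ ^ 2 + ‖w₂ t‖ ^ 2)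
            ≤ c * Real.exp (-μ * t) * Real.sqrt (‖w₁ 0‖ ^ 2 + ‖w₂ 0‖ ^ 2) := by
  obtain ⟨l, hl, hLl⟩ := aux_coercive L hL
  obtain ⟨j, hj, hJj⟩ := aux_coercive J hJ
  obtain ⟨B, hB, hJB, hLB⟩ : ∃ B : ℝ, 0 < B ∧ ‖J‖ ≤ B ∧ ‖L‖ ≤ B :=
    ⟨‖J‖ + ‖L‖ + 1, by positivity, by linarith [norm_nonneg L], by linarith [norm_nonneg J]⟩
  obtain ⟨ε, hε, hε1, hε2, hε3⟩ : ∃ ε : ℝ, 0 < ε ∧ ε * B ≤ k₂ * l ∧ ε * B ≤ k₁ * l ∧ ε * B ≤ j / 2 := by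
    refine ⟨min (k₂ * l) (min (k₁ * l) (j / 2)) / B, by positivity, ?_, ?_, ?_⟩ <;>
      rw [div_mul_cancel₀ _ hB.ne'] <;> simp
  obtain ⟨a, ha, ha1, ha2⟩ : ∃ a : ℝ, 0 < a ∧ a ≤ k₁ * l / 2 ∧ a ≤ j / 4 :=
    ⟨min (k₁ * l / 2) (j / 4), by positivity, by simp, by simp⟩
  obtain ⟨d, hd, hd1, hd2⟩ : ∃ d : ℝ, 0 < d ∧ d ≤ k₂ * l / 2 ∧ d ≤ ε * k₁ * l :=
    ⟨min (k₂ * l / 2) (ε * k₁ * l), by positivity, by simp, by simp⟩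
  obtain ⟨b, hb, hab, hbdef⟩ : ∃ b : ℝ, 0 < b ∧ a ≤ b ∧ (k₁ + ε * k₂) * B + B / 2 + ε * B ≤ b :=
    ⟨(k₁ + ε * k₂) * B + B / 2 + ε * B + a, by positivity,
      by linarith [show 0 < (k₁ + ε * k₂) * B + B / 2 + ε * B by positivity], by linarith⟩
  -- quadratic form
  let W : E → E → ℝ := fun x y =>
    (k₁ + ε * k₂) * inner ℝ x (L x) + 1 / 2 * inner ℝ y (J y) + ε * inner ℝ x (J y)
  have hWlow : ∀ x y, a * (‖x‖ ^ 2 + ‖y‖ ^ 2) ≤ W x y := by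
    intro x y
    have h1 := hLl x
    have h2 := hJj y
    have h3 := (abs_le.mp (aux_bound J B hJB x y)).1
    have h4 : ‖x‖ * ‖y‖ ≤ (‖x‖ ^ 2 + ‖y‖ ^ 2) / 2 := by nlinarith [sq_nonneg (‖x‖ - ‖y‖)]
    have h5 : -(ε * B * ((‖x‖ ^ 2 + ‖y‖ ^ 2) / 2)) ≤ ε * inner ℝ x (J y) := by
      have : ε * B * (‖x‖ * ‖y‖) ≤ ε * B * ((‖x‖ ^ 2 + ‖y‖ ^ 2) / 2) := by gcongr
      nlinarith [mul_le_mul_of_nonneg_left h3 hε.le]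
    have h6 : (k₁ + ε * k₂) * (l * ‖x‖ ^ 2) ≤ (k₁ + ε * k₂) * inner ℝ x (L x) := by gcongr
    have h7 : 0 ≤ ε * k₂ * (l * ‖x‖ ^ 2) := by positivity
    have h8 := mul_le_mul_of_nonneg_right hε2 (sq_nonneg ‖x‖)
    have h9 := mul_le_mul_of_nonneg_right hε3 (sq_nonneg ‖y‖)
    have h10 := mul_le_mul_of_nonneg_right ha1 (sq_nonneg ‖x‖)
    have h11 := mul_le_mul_of_nonneg_right ha2 (sq_nonneg ‖y‖)
    simp only [W]
    linarith
  have hWup : ∀ x y, W x y ≤ b * (‖x‖ ^ 2 + ‖y‖ ^ 2) := by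
    intro x y
    have h1 := (abs_le.mp (aux_bound L B hLB x x)).2
    have h2 := (abs_le.mp (aux_bound J B hJB y y)).2
    have h3 := (abs_le.mp (aux_bound J B hJB x y)).2
    have h4 : ‖x‖ * ‖y‖ ≤ (‖x‖ ^ 2 + ‖y‖ ^ 2) := by
      nlinarith [sq_nonneg (‖x‖ - ‖y‖), sq_nonneg ‖x‖, sq_nonneg ‖y‖]
    have e1 : (k₁ + ε * k₂) * inner ℝ x (L x) ≤ (k₁ + ε * k₂) * (B * (‖x‖ ^ 2 + ‖y‖ ^ 2)) := by
      have : inner ℝ x (L x) ≤ B * (‖x‖ ^ 2 + ‖y‖ ^ 2) :=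
        h1.trans (by gcongr; nlinarith [sq_nonneg ‖y‖])
      gcongr
    have e2 : inner ℝ y (J y) ≤ B * (‖x‖ ^ 2 + ‖y‖ ^ 2) :=
        h2.trans (by gcongr; nlinarith [sq_nonneg ‖x‖])
    have e3 : ε * inner ℝ x (J y) ≤ ε * (B * (‖x‖ ^ 2 + ‖y‖ ^ 2)) := by
      have : inner ℝ x (J y) ≤ B * (‖x‖ ^ 2 + ‖y‖ ^ 2) := h3.trans (by gcongr)
      gcongr
    have e4 := mul_le_mul_of_nonneg_right hbdef (show 0 ≤ ‖x‖ ^ 2 + ‖y‖ ^ 2 by positivity)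
    simp only [W]
    linarith
  refine ⟨Real.sqrt (b / a), d / b / 2, ?_, by positivity, ?_⟩
  · rw [Real.one_le_sqrt, one_le_div ha]; exact hab
  intro w₁ w₂ w₂' h1 h2 h3
  have hder : ∀ t ∈ Set.Ici (0 : ℝ), HasDerivWithinAt (fun t => W (w₁ t) (w₂ t))
      (-k₂ * inner ℝ (w₂ t) (L (w₂ t)) + ε / 2 * inner ℝ (w₂ t) (J (w₂ t))
        - ε * k₁ * inner ℝ (w₁ t) (L (w₁ t))) (Set.Ici 0) t := by
    intro t ht
    have d1 := h1 t ht
    have d2 := h2 t ht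
    have dL1 : HasDerivWithinAt (fun t => L (w₁ t)) _ _ t :=
      L.hasFDerivAt.comp_hasDerivWithinAt t d1
    have dJ2 : HasDerivWithinAt (fun t => J (w₂ t)) _ _ t :=
      J.hasFDerivAt.comp_hasDerivWithinAt t d2
    have := (((d1.inner ℝ dL1).const_mul (k₁ + ε * k₂)).add
      ((d2.inner ℝ dJ2).const_mul (1 / 2))).add ((d1.inner ℝ dJ2).const_mul ε)
    refine this.congr_deriv ?_
    rw [hJs (w₂' t) (w₂ t), h3 t ht]
    simp only [map_add, map_smul, inner_neg_right, inner_add_right, inner_smul_left,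
      inner_smul_right, conj_trivial]
    rw [hLs (w₂ t) (w₁ t)]
    ring
  have hneg : ∀ t ∈ Set.Ici (0 : ℝ), (-k₂ * inner ℝ (w₂ t) (L (w₂ t)) + ε / 2 * inner ℝ (w₂ t) (J (w₂ t))
        - ε * k₁ * inner ℝ (w₁ t) (L (w₁ t))) ≤ -(d / b) * W (w₁ t) (w₂ t) := by
    intro t ht
    have e0 : (d / b) * W (w₁ t) (w₂ t) ≤ d * (‖w₁ t‖ ^ 2 + ‖w₂ t‖ ^ 2) := by
      calc _ ≤ (d / b) * (b * (‖w₁ t‖ ^ 2 + ‖w₂ t‖ ^ 2)) := by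
            have := hWup (w₁ t) (w₂ t)
            gcongr
        _ = _ := by field_simp
    have e1 := mul_le_mul_of_nonneg_left (hLl (w₂ t)) hk₂.le
    have e2 := mul_le_mul_of_nonneg_left (hLl (w₁ t)) (mul_pos hε hk₁).le
    have e3 := mul_le_mul_of_nonneg_left (abs_le.mp (aux_bound J B hJB (w₂ t) (w₂ t))).2 hε.le
    have e4 := mul_le_mul_of_nonneg_right hε1 (sq_nonneg ‖w₂ t‖)
    have e5 := mul_le_mul_of_nonneg_right hd1 (sq_nonneg ‖w₂ t‖)
    have e6 := mul_le_mul_of_nonneg_right hd2 (sq_nonneg ‖w₁ t‖)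
    linarith
  have hg : ∀ t ∈ Set.Ici (0 : ℝ), HasDerivWithinAt
      (fun t => Real.exp (d / b * t) * W (w₁ t) (w₂ t)) _ (Set.Ici 0) t := fun t ht =>
    (((hasDerivAt_id t).const_mul (d / b)).exp.hasDerivWithinAt).mul (hder t ht)
  have hanti : AntitoneOn (fun t => Real.exp (d / b * t) * W (w₁ t) (w₂ t)) (Set.Ici 0) := by
    refine antitoneOn_of_hasDerivWithinAt_nonpos (convex_Ici 0)
      (fun t ht => (hg t ht).continuousWithinAt)
      (fun t ht => (hg t (interior_subset ht)).mono interior_subset) ?_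
    intro t ht
    have := mul_le_mul_of_nonneg_left (hneg t (interior_subset ht)) (Real.exp_pos (d / b * t)).le
    simp only [id]
    linarith
  intro t ht
  have hle := hanti (Set.mem_Ici.mpr le_rfl) ht ht
  simp only [mul_zero, Real.exp_zero, one_mul] at hle
  have hfin : ‖w₁ t‖ ^ 2 + ‖w₂ t‖ ^ 2 ≤
      b / a * Real.exp (-(d / b / 2) * t) ^ 2 * (‖w₁ 0‖ ^ 2 + ‖w₂ 0‖ ^ 2) := by
    have q1 := hWlow (w₁ t) (w₂ t)
    have q2 := hWup (w₁ 0) (w₂ 0)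
    have hexp : Real.exp (-(d / b / 2) * t) ^ 2 = (Real.exp (d / b * t))⁻¹ := by
      rw [← Real.exp_neg, ← Real.exp_nat_mul]; congr 1; push_cast; ring
    rw [hexp]
    have hE := Real.exp_pos (d / b * t)
    have q3 := mul_le_mul_of_nonneg_left q1 hE.le
    rw [show b / a * (Real.exp (d / b * t))⁻¹ * (‖w₁ 0‖ ^ 2 + ‖w₂ 0‖ ^ 2)
      = b * (‖w₁ 0‖ ^ 2 + ‖w₂ 0‖ ^ 2) / (a * Real.exp (d / b * t)) by field_simp,
      le_div_iff₀ (by positivity)]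
    linarith
  refine (Real.sqrt_le_sqrt hfin).trans_eq ?_
  rw [Real.sqrt_mul (by positivity), Real.sqrt_mul (by positivity),
    Real.sqrt_sq (Real.exp_pos _).le]

lemma aux_inner (A : Matrix (Fin 3) (Fin 3) ℝ) (x y : EuclideanSpace ℝ (Fin 3)) :
    inner ℝ x (Matrix.toEuclideanCLM (𝕜 := ℝ) A y) = x.ofLp ⬝ᵥ (A *ᵥ y.ofLp) := by
  rw [EuclideanSpace.inner_eq_star_dotProduct, Matrix.ofLp_toEuclideanCLM, dotProduct_comm]
  simp

lemma aux_symm (A : Matrix (Fin 3) (Fin 3) ℝ) (hA : A.PosDef) (x y : EuclideanSpace ℝ (Fin 3)) :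
    inner ℝ x (Matrix.toEuclideanCLM (𝕜 := ℝ) A y)
      = inner ℝ y (Matrix.toEuclideanCLM (𝕜 := ℝ) A x) := by
  have h : Aᵀ = A := by simpa using hA.isHermitian.eq
  rw [aux_inner, aux_inner, dotProduct_mulVec, ← mulVec_transpose, h, dotProduct_comm]

lemma aux_pos (A : Matrix (Fin 3) (Fin 3) ℝ) (hA : A.PosDef) (x : EuclideanSpace ℝ (Fin 3))
    (hx : x ≠ 0) : 0 < inner ℝ x (Matrix.toEuclideanCLM (𝕜 := ℝ) A x) := by
  rw [aux_inner]
  have := hA.dotProduct_mulVec_pos (x := x.ofLp) (by simpa using hx)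
  simpa using this

/-- With `J, L` symmetric positive definite and `k₁, k₂ > 0`, there exist
`c ≥ 1` and `μ > 0` such that every solution `(w₁, w₂)` on `[0, ∞)` of
`ẇ₁ = (1/2)w₂`, `J ẇ₂ = −L(k₁w₁ + k₂w₂)` satisfies
`‖(w₁(t), w₂(t))‖ ≤ c e^{−μt} ‖(w₁(0), w₂(0))‖` for all `t ≥ 0`, where `‖·‖` is the
Euclidean norm on `ℝ³ × ℝ³ ≅ ℝ⁶`. -/
theorem limit_state_feedback_system_exponentially_stable
    (J L : Matrix (Fin 3) (Fin 3) ℝ) (hJ : J.PosDef) (hL : L.PosDef)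
    (k₁ k₂ : ℝ) (hk₁ : 0 < k₁) (hk₂ : 0 < k₂) :
    ∃ c μ : ℝ, 1 ≤ c ∧ 0 < μ ∧
      ∀ w₁ w₂ w₂' : ℝ → EuclideanSpace ℝ (Fin 3),
        (∀ t ∈ Set.Ici (0 : ℝ), HasDerivWithinAt w₁ ((1/2 : ℝ) • w₂ t) (Set.Ici 0) t) →
        (∀ t ∈ Set.Ici (0 : ℝ), HasDerivWithinAt w₂ (w₂' t) (Set.Ici 0) t) →
        (∀ t ∈ Set.Ici (0 : ℝ), J *ᵥ w₂' t = -(L *ᵥ (k₁ • w₁ t + k₂ • w₂ t))) →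
        ∀ t ∈ Set.Ici (0 : ℝ),
          Real.sqrt (‖w₁ t‖ ^ 2 + ‖w₂ t‖ ^ 2)
            ≤ c * Real.exp (-μ * t) * Real.sqrt (‖w₁ 0‖ ^ 2 + ‖w₂ 0‖ ^ 2) := by
  obtain ⟨c, μ, hc, hμ, h⟩ := aux_main (Matrix.toEuclideanCLM (𝕜 := ℝ) J)
    (Matrix.toEuclideanCLM (𝕜 := ℝ) L) (aux_symm J hJ) (aux_symm L hL) (aux_pos J hJ)
    (aux_pos L hL) k₁ k₂ hk₁ hk₂
  refine ⟨c, μ, hc, hμ, fun w₁ w₂ w₂' h1 h2 h3 => h w₁ w₂ w₂' h1 h2 fun t ht => ?_⟩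
  apply WithLp.ofLp_injective 2
  simpa [Matrix.ofLp_toEuclideanCLM, -map_add, -map_smul, -neg_add_rev] using h3 t ht
end

section
/- Fix real constants μ > 0, R > 0, n > 0, φ₀, incl, Ω. Let m̂ = (0, 0, −1) ∈ ℝ³, let M be the product of the rotation by angle Ω about the z-axis with the rotation by angle incl about the x-axis, let r̂(t) = M · (cos(n t + φ₀), sin(n t + φ₀), 0) ∈ ℝ³, and define B(t) = (μ / R³) (3 (m̂ · r̂(t)) r̂(t) − m̂). Then the symmetric positive semidefinite matrix ∫₀^{2π/n} B(t)^× (B(t)^×)ᵀ dt is positive definite if and only if sin(incl) ≠ 0. -/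
open Matrix

/-- The skew-symmetric matrix `a^×` associated with `a ∈ ℝ³`, satisfying `a^× b = a × b`. -/
def crossMat (a : Fin 3 → ℝ) : Matrix (Fin 3) (Fin 3) ℝ :=
  !![0, -a 2, a 1; a 2, 0, -a 0; -a 1, a 0, 0]

theorem quad_eq (B : ℝ → Fin 3 → ℝ) (hB : Continuous B) (T : ℝ) (x : Fin 3 → ℝ) :
    star x ⬝ᵥ ((Matrix.of fun i j =>
        ∫ t in (0 : ℝ)..T, (crossMat (B t) * (crossMat (B t))ᵀ) i j) *ᵥ x) =
    ∫ t in (0 : ℝ)..T, ((x 1 * B t 2 - x 2 * B t 1) ^ 2 + (x 2 * B t 0 - x 0 * B t 2) ^ 2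
      + (x 0 * B t 1 - x 1 * B t 0) ^ 2) := by
  have hc : ∀ i, Continuous fun t => B t i := fun i => by fun_prop
  have hM : ∀ i j, Continuous fun t => (crossMat (B t) * (crossMat (B t))ᵀ) i j := by
    intro i j
    have h0 := hc 0
    have h1 := hc 1
    have h2 := hc 2
    fin_cases i <;> fin_cases j <;>
      simp [crossMat, Matrix.mul_apply, Fin.sum_univ_three] <;> fun_prop
  have key : ∀ t, ((x 1 * B t 2 - x 2 * B t 1) ^ 2 + (x 2 * B t 0 - x 0 * B t 2) ^ 2
      + (x 0 * B t 1 - x 1 * B t 0) ^ 2) =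
      ∑ i, ∑ j, x i * ((crossMat (B t) * (crossMat (B t))ᵀ) i j * x j) := by
    intro t
    simp [crossMat, Matrix.mul_apply, Fin.sum_univ_three]
    ring
  simp_rw [key]
  rw [intervalIntegral.integral_finsetSum]
  · simp only [dotProduct, mulVec, Matrix.of_apply, star_trivial]
    refine Finset.sum_congr rfl fun i _ => ?_
    rw [intervalIntegral.integral_finsetSum, Finset.mul_sum]
    · refine Finset.sum_congr rfl fun j _ => ?_
      rw [intervalIntegral.integral_const_mul, intervalIntegral.integral_mul_const]
    · intro j _
      exact (continuous_const.mul ((hM i j).mul continuous_const)).intervalIntegrable _ _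
  · intro i _
    exact (continuous_finsetSum _ fun j _ =>
      continuous_const.mul ((hM i j).mul continuous_const)).intervalIntegrable _ _

theorem gen_herm (B : ℝ → Fin 3 → ℝ) (T : ℝ) :
    (Matrix.of fun i j =>
        ∫ t in (0 : ℝ)..T, (crossMat (B t) * (crossMat (B t))ᵀ) i j).IsHermitian := by
  ext i j
  simp only [conjTranspose_apply, Matrix.of_apply, star_trivial]
  congr 1
  ext t
  simp [Matrix.mul_apply, mul_comm]

theorem gen_psd (B : ℝ → Fin 3 → ℝ) (hB : Continuous B) (T : ℝ) (hT : 0 < T) :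
    (Matrix.of fun i j =>
        ∫ t in (0 : ℝ)..T, (crossMat (B t) * (crossMat (B t))ᵀ) i j).PosSemidef := by
  refine .of_dotProduct_mulVec_nonneg (gen_herm B T) fun x => ?_
  rw [quad_eq B hB]
  exact intervalIntegral.integral_nonneg hT.le fun t _ => by positivity

theorem gen_pd (B : ℝ → Fin 3 → ℝ) (hB : Continuous B) (T : ℝ) (hT : 0 < T)
    (hper : Function.Periodic B T)
    (h : ∀ x : Fin 3 → ℝ, (∀ t, x 1 * B t 2 - x 2 * B t 1 = 0 ∧ x 2 * B t 0 - x 0 * B t 2 = 0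
      ∧ x 0 * B t 1 - x 1 * B t 0 = 0) → x = 0) :
    (Matrix.of fun i j =>
        ∫ t in (0 : ℝ)..T, (crossMat (B t) * (crossMat (B t))ᵀ) i j).PosDef := by
  refine .of_dotProduct_mulVec_pos (gen_herm B T) fun x hx => ?_
  rw [quad_eq B hB]
  have hc : ∀ i, Continuous fun t => B t i := fun i => by fun_prop
  have h0 := hc 0
  have h1 := hc 1
  have h2 := hc 2
  refine intervalIntegral.integral_pos hT (by fun_prop) (fun t _ => by positivity) ?_
  by_contra hcon
  push Not at hcon
  refine hx (h x fun t => ?_)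
  obtain ⟨y, hy, hty⟩ := hper.exists_mem_Ico₀ hT t
  have := hcon y ⟨hy.1, hy.2.le⟩
  rw [hty]
  refine ⟨?_, ?_, ?_⟩ <;> apply pow_eq_zero_iff (two_ne_zero) |>.1 <;>
  nlinarith [sq_nonneg (x 1 * B y 2 - x 2 * B y 1), sq_nonneg (x 2 * B y 0 - x 0 * B y 2),
    sq_nonneg (x 0 * B y 1 - x 1 * B y 0)]

/-- For the dipole geomagnetic field `B` along a circular orbit of
inclination `incl` (with `mhat = (0,0,−1)`, `M = R_z(Ω) R_x(incl)`,
`rhat(t) = M (cos(nt+φ₀), sin(nt+φ₀), 0)`,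
`B(t) = (μ/R³)(3(mhat·rhat(t))rhat(t) − mhat)`), the symmetric positive semidefinite
matrix `∫₀^{2π/n} B(t)^× (B(t)^×)ᵀ dt` is positive definite if and only if
`sin(incl) ≠ 0`. -/
theorem dipole_average_posDef_iff (μm R n φ₀ incl Ω : ℝ)
    (hμ : 0 < μm) (hR : 0 < R) (hn : 0 < n) :
    let mhat : Fin 3 → ℝ := ![0, 0, -1]
    let M : Matrix (Fin 3) (Fin 3) ℝ :=
      !![Real.cos Ω, -Real.sin Ω, 0; Real.sin Ω, Real.cos Ω, 0; 0, 0, 1] *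
        !![1, 0, 0; 0, Real.cos incl, -Real.sin incl; 0, Real.sin incl, Real.cos incl]
    let rhat : ℝ → Fin 3 → ℝ :=
      fun t => M *ᵥ ![Real.cos (n * t + φ₀), Real.sin (n * t + φ₀), 0]
    let B : ℝ → Fin 3 → ℝ :=
      fun t => (μm / R ^ 3) • ((3 * (mhat ⬝ᵥ rhat t)) • rhat t - mhat)
    (Matrix.of fun i j =>
        ∫ t in (0 : ℝ)..(2 * Real.pi / n), (crossMat (B t) * (crossMat (B t))ᵀ) i j).PosSemidef
    ∧ ((Matrix.of fun i j =>
        ∫ t in (0 : ℝ)..(2 * Real.pi / n),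
          (crossMat (B t) * (crossMat (B t))ᵀ) i j).PosDef
      ↔ Real.sin incl ≠ 0) := by
  intro mhat M rhat B
  have hT : 0 < 2 * Real.pi / n := by positivity
  have hk : μm / R ^ 3 ≠ 0 := by positivity
  have hB0 : ∀ t, B t 0 = μm / R ^ 3 * (-3 * (Real.sin incl * Real.sin (n * t + φ₀)) *
      (Real.cos Ω * Real.cos (n * t + φ₀)
        - Real.sin Ω * Real.cos incl * Real.sin (n * t + φ₀))) := by
    intro t
    simp only [B, rhat, M, mhat, Pi.smul_apply, Pi.sub_apply, smul_eq_mul, Matrix.mulVec,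
      dotProduct, Matrix.mul_apply, Fin.sum_univ_three]
    congr 1
    simp
    left
    ring
  have hB1 : ∀ t, B t 1 = μm / R ^ 3 * (-3 * (Real.sin incl * Real.sin (n * t + φ₀)) *
      (Real.sin Ω * Real.cos (n * t + φ₀)
        + Real.cos Ω * Real.cos incl * Real.sin (n * t + φ₀))) := by
    intro t
    simp only [B, rhat, M, mhat, Pi.smul_apply, Pi.sub_apply, smul_eq_mul, Matrix.mulVec,
      dotProduct, Matrix.mul_apply, Fin.sum_univ_three]
    congr 1
    simp
  have hB2 : ∀ t, B t 2 = μm / R ^ 3 *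
      (-3 * (Real.sin incl * Real.sin (n * t + φ₀)) ^ 2 + 1) := by
    intro t
    simp only [B, rhat, M, mhat, Pi.smul_apply, Pi.sub_apply, smul_eq_mul, Matrix.mulVec,
      dotProduct, Matrix.mul_apply, Fin.sum_univ_three]
    congr 1
    simp
    ring
  have hB : Continuous B := by
    refine continuous_pi fun i => ?_
    fin_cases i
    · simp only [Fin.zero_eta, hB0]; fun_prop
    · simp only [Fin.mk_one, hB1]; fun_prop
    · simp only [Fin.reduceFinMk, hB2]; fun_prop
  have hper : Function.Periodic B (2 * Real.pi / n) := by
    intro t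
    have : n * (t + 2 * Real.pi / n) + φ₀ = n * t + φ₀ + 2 * Real.pi := by
      field_simp
      ring
    simp only [B, rhat, this, Real.cos_add_two_pi, Real.sin_add_two_pi]
  clear_value B
  refine ⟨gen_psd B hB _ hT, fun hpd hs => ?_, fun hs => gen_pd B hB _ hT hper fun x hx => ?_⟩
  · have hne : (![0, 0, 1] : Fin 3 → ℝ) ≠ 0 := fun h => by simpa using congrFun h 2
    have := hpd.dotProduct_mulVec_pos hne
    rw [quad_eq B hB] at this
    simp [hB0, hB1, hs] at this
  · have e0 : n * (-φ₀ / n) + φ₀ = 0 := by field_simp; ring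
    have e1 : n * ((Real.pi / 4 - φ₀) / n) + φ₀ = Real.pi / 4 := by field_simp; ring
    have h0 := hx (-φ₀ / n)
    have h1 := hx ((Real.pi / 4 - φ₀) / n)
    simp only [hB0, hB1, hB2, e0, Real.sin_zero, Real.cos_zero] at h0
    simp only [hB0, hB1, hB2, e1, Real.sin_pi_div_four, Real.cos_pi_div_four] at h1
    obtain ⟨ha, hb, -⟩ := h0
    have hx1 : x 1 = 0 := by simpa [hk] using ha
    have hx0 : x 0 = 0 := by simpa [hk] using hb
    obtain ⟨ha, hb, -⟩ := h1
    have hx2 : x 2 = 0 := by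
      by_contra hx2
      have h2 : (√2 / 2 : ℝ) ≠ 0 := by positivity
      generalize (√2 / 2 : ℝ) = a at *
      rw [hx1] at ha
      rw [hx0] at hb
      have hp : x 2 * (μm / R ^ 3) * (-3 * (Real.sin incl * a)) * a ≠ 0 :=
        mul_ne_zero (mul_ne_zero (mul_ne_zero hx2 hk)
          (mul_ne_zero (by norm_num) (mul_ne_zero hs h2))) h2
      have u : Real.cos Ω - Real.sin Ω * Real.cos incl = 0 :=
        (mul_eq_zero.1 (by linear_combination hb :
          (x 2 * (μm / R ^ 3) * (-3 * (Real.sin incl * a)) * a) *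
            (Real.cos Ω - Real.sin Ω * Real.cos incl) = 0)).resolve_left hp
      have v : Real.sin Ω + Real.cos Ω * Real.cos incl = 0 :=
        (mul_eq_zero.1 (by linear_combination -ha :
          (x 2 * (μm / R ^ 3) * (-3 * (Real.sin incl * a)) * a) *
            (Real.sin Ω + Real.cos Ω * Real.cos incl) = 0)).resolve_left hp
      have w : 1 + Real.cos incl ^ 2 = 0 := by
        linear_combination (Real.cos Ω - Real.sin Ω * Real.cos incl) * u +
          (Real.sin Ω + Real.cos Ω * Real.cos incl) * v
          - (1 + Real.cos incl ^ 2) * Real.sin_sq_add_cos_sq Ω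
      nlinarith [sq_nonneg (Real.cos incl)]
    ext i
    fin_cases i <;> simp [hx0, hx1, hx2]
end
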